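/- arXiv:1807.02089 — 2 statements merged into one kernel-verified Lean document; each statement's English description precedes it below -/
import Mathlib

section
/- Let d ≥ 1, λ > 0, m ≥ 1, t ≥ 1, g ≥ 0, τ ∈ [0,1], and θ ∈ ℝ^d with ‖θ‖₂ ≤ 1. Let A_1,…,A_{t−1} ∈ ℝ^d, X_1,…,X_{t−1} ∈ [0,1], and D_1,…,D_{t−1} ∈ ℕ. Define η_s = X_s − ⟨A_s,θ⟩, ε_s = 1{D_s ≤ m} − τ, and the windowed estimator θ̂ = V_t(λ)^{-1} Σ_{s=1}^{t−1} X_s·1{D_s ≤ min(m, t−s)}·A_s. If ‖Σ_{s=1}^{t−1} A_s X_s ε_s‖_{V_t(λ)^{-1}} ≤ g and ‖Σ_{s=1}^{t−1} A_s η_s‖_{V_t(λ)^{-1}} ≤ g, then ‖θ̂ − τ·θ‖_{V_t(λ)} ≤ 2g + √λ + Σ_{s=max(1,t−m)}^{t−1} ‖A_s‖_{V_t(λ)^{-1}}. -/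
open Finset Matrix

/-- `mnorm M x = √(xᵀ M x)`, the norm associated to a positive definite matrix `M`. -/
noncomputable def mnorm {d : ℕ} (M : Matrix (Fin d) (Fin d) ℝ) (x : Fin d → ℝ) : ℝ :=
  Real.sqrt (x ⬝ᵥ M.mulVec x)

/-- `Vmat A lam t = lam • I + ∑_{s=1}^{t-1} A_s A_sᵀ`. -/
noncomputable def Vmat {d : ℕ} (A : ℕ → Fin d → ℝ) (lam : ℝ) (t : ℕ) :
    Matrix (Fin d) (Fin d) ℝ :=
  lam • (1 : Matrix (Fin d) (Fin d) ℝ) + ∑ s ∈ Finset.Ico 1 t, vecMulVec (A s) (A s)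

/-!
Since `‖V⁻¹ b - y‖_V = ‖b - V y‖_{V⁻¹}`, the error of the estimator is read off from
`b - V (τ θ)`, where `b` is the windowed sum of observed rewards. Writing
`1{D_s ≤ min(m, t - s)} = 1{D_s ≤ m} - 1{t - s < D_s ≤ m}` and `X_s = ⟨A_s, θ⟩ + η_s` gives
`b - V (τ θ) = ∑ X_s ε_s A_s + τ ∑ η_s A_s - τ λ θ - ∑_{t - s < D_s ≤ m} X_s A_s`.
The third term has norm at most `|τ| √λ ‖θ‖₂` because `V ≥ λ I`, and the last sum only involves
the final `m` rounds.
-/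

section Mnorm

variable {d : ℕ} {M : Matrix (Fin d) (Fin d) ℝ}

lemma mnorm_nonneg (M : Matrix (Fin d) (Fin d) ℝ) (x : Fin d → ℝ) : 0 ≤ mnorm M x :=
  Real.sqrt_nonneg _

lemma mnorm_smul (M : Matrix (Fin d) (Fin d) ℝ) (c : ℝ) (x : Fin d → ℝ) :
    mnorm M (c • x) = |c| * mnorm M x := by
  have quadratic : (c • x) ⬝ᵥ M *ᵥ (c • x) = c ^ 2 * (x ⬝ᵥ M *ᵥ x) := by
    rw [mulVec_smul, smul_dotProduct, dotProduct_smul, smul_eq_mul, smul_eq_mul]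
    ring
  rw [mnorm, quadratic, Real.sqrt_mul (sq_nonneg c), Real.sqrt_sq_eq_abs, mnorm]

lemma mnorm_eq_norm (hM : M.PosSemidef) (x : Fin d → ℝ) :
    mnorm M x = (M.toSeminormedAddCommGroup hM).norm x := by
  change √(x ⬝ᵥ M *ᵥ x) = √((M *ᵥ x) ⬝ᵥ x)
  rw [dotProduct_comm]

lemma mnorm_add_le (hM : M.PosSemidef) (x y : Fin d → ℝ) :
    mnorm M (x + y) ≤ mnorm M x + mnorm M y := by
  simp only [mnorm_eq_norm hM]
  exact @norm_add_le _ (M.toSeminormedAddCommGroup hM).toSeminormedAddGroup x y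

lemma mnorm_sub_le (hM : M.PosSemidef) (x y : Fin d → ℝ) :
    mnorm M (x - y) ≤ mnorm M x + mnorm M y := by
  simp only [mnorm_eq_norm hM]
  exact @norm_sub_le _ (M.toSeminormedAddCommGroup hM).toSeminormedAddGroup x y

lemma mnorm_sum_smul_le {ι : Type*} (hM : M.PosSemidef) (S : Finset ι) (c : ι → ℝ)
    (v : ι → Fin d → ℝ) :
    mnorm M (∑ i ∈ S, c i • v i) ≤ ∑ i ∈ S, |c i| * mnorm M (v i) := by
  simp_rw [← mnorm_smul, mnorm_eq_norm hM]
  exact @norm_sum_le _ _ (M.toSeminormedAddCommGroup hM) S fun i ↦ c i • v i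

lemma mnorm_inv_mulVec_sub (hM : IsUnit M.det) (b y : Fin d → ℝ) :
    mnorm M (M⁻¹ *ᵥ b - y) = mnorm M⁻¹ (b - M *ᵥ y) := by
  have error : M⁻¹ *ᵥ (b - M *ᵥ y) = M⁻¹ *ᵥ b - y := by
    rw [mulVec_sub, mulVec_mulVec, nonsing_inv_mul _ hM, one_mulVec]
  have residual : M *ᵥ (M⁻¹ *ᵥ b - y) = b - M *ᵥ y := by
    rw [mulVec_sub, mulVec_mulVec, mul_nonsing_inv _ hM, one_mulVec]
  rw [mnorm, mnorm, error, residual, dotProduct_comm]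

end Mnorm

section LowerBound

lemma mul_dotProduct_inv_mulVec_le_dotProduct_self {n : Type*} [Fintype n] [DecidableEq n]
    {M : Matrix n n ℝ} {c : ℝ} (hM : IsUnit M.det) (hc : 0 ≤ c) (hcM : (M - c • 1).PosSemidef)
    (x : n → ℝ) : c * (x ⬝ᵥ M⁻¹ *ᵥ x) ≤ x ⬝ᵥ x := by
  set u := M⁻¹ *ᵥ x
  have hMu : M *ᵥ u = x := by rw [mulVec_mulVec, mul_nonsing_inv _ hM, one_mulVec]
  have lower : c * (u ⬝ᵥ u) ≤ x ⬝ᵥ u := by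
    have h := hcM.dotProduct_mulVec_nonneg u
    rw [star_trivial, sub_mulVec, hMu, smul_mulVec, one_mulVec, dotProduct_sub, dotProduct_smul,
      smul_eq_mul, dotProduct_comm u x] at h
    linarith
  have square : 0 ≤ x ⬝ᵥ x - 2 * c * (x ⬝ᵥ u) + c * (c * (u ⬝ᵥ u)) :=
    calc 0 ≤ (x - c • u) ⬝ᵥ (x - c • u) := by
          simpa only [star_trivial] using dotProduct_star_self_nonneg (x - c • u)
      _ = x ⬝ᵥ x - 2 * c * (x ⬝ᵥ u) + c * (c * (u ⬝ᵥ u)) := by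
          simp only [sub_dotProduct, dotProduct_sub, smul_dotProduct, dotProduct_smul, smul_eq_mul,
            dotProduct_comm u x]
          ring
  linarith [mul_le_mul_of_nonneg_left lower hc]

lemma mul_mnorm_inv_le {d : ℕ} {M : Matrix (Fin d) (Fin d) ℝ} {c : ℝ} (hM : IsUnit M.det)
    (hc : 0 ≤ c) (hcM : (M - c • 1).PosSemidef) (x : Fin d → ℝ) :
    c * mnorm M⁻¹ x ≤ √c * √(x ⬝ᵥ x) :=
  calc c * mnorm M⁻¹ x = √c * √(c * (x ⬝ᵥ M⁻¹ *ᵥ x)) := by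
        rw [Real.sqrt_mul hc, ← mul_assoc, Real.mul_self_sqrt hc, mnorm]
    _ ≤ √c * √(x ⬝ᵥ x) := by
        gcongr
        exact mul_dotProduct_inv_mulVec_le_dotProduct_self hM hc hcM x

end LowerBound

section Vmat

variable {d : ℕ}

lemma Vmat_mulVec (A : ℕ → Fin d → ℝ) (lam : ℝ) (t : ℕ) (x : Fin d → ℝ) :
    Vmat A lam t *ᵥ x = lam • x + ∑ s ∈ Ico 1 t, (A s ⬝ᵥ x) • A s := by
  simp only [Vmat, add_mulVec, smul_mulVec, one_mulVec, sum_mulVec, vecMulVec_mulVec,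
    op_smul_eq_smul]

lemma Vmat_sub_smul_one_posSemidef (A : ℕ → Fin d → ℝ) (lam : ℝ) (t : ℕ) :
    (Vmat A lam t - lam • 1).PosSemidef := by
  rw [Vmat, add_sub_cancel_left]
  exact posSemidef_sum _ fun s _ ↦ posSemidef_vecMulVec_self_star (A s)

lemma Vmat_posDef (A : ℕ → Fin d → ℝ) {lam : ℝ} (hlam : 0 < lam) (t : ℕ) :
    (Vmat A lam t).PosDef := by
  rw [← add_sub_cancel (lam • 1) (Vmat A lam t)]
  exact (PosDef.one.smul hlam).add_posSemidef (Vmat_sub_smul_one_posSemidef A lam t)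

end Vmat

section Delay

/-- The rounds `s < t` with `t - s < D_s ≤ m`: at time `t` their reward is still missing from the
windowed estimator, although its delay does not exceed the window length `m`. -/
def pendingRounds (D : ℕ → ℕ) (m t : ℕ) : Finset ℕ :=
  {s ∈ Ico 1 t | t - s < D s ∧ D s ≤ m}

lemma pendingRounds_subset_Ico (D : ℕ → ℕ) (m t : ℕ) :
    pendingRounds D m t ⊆ Ico (max 1 (t - m)) t := by
  intro s hs
  simp only [pendingRounds, mem_filter, mem_Ico] at hs ⊢
  omega

lemma sum_mul_ite_le_min_smul {R E : Type*} [Ring R] [AddCommGroup E] [Module R E]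
    (X : ℕ → R) (A : ℕ → E) (D : ℕ → ℕ) (m t : ℕ) :
    ∑ s ∈ Ico 1 t, (X s * if D s ≤ min m (t - s) then 1 else 0) • A s =
      ∑ s ∈ Ico 1 t, (X s * if D s ≤ m then 1 else 0) • A s -
        ∑ s ∈ pendingRounds D m t, X s • A s := by
  rw [pendingRounds, sum_filter, ← sum_sub_distrib]
  refine sum_congr rfl fun s _ ↦ ?_
  by_cases hm : D s ≤ m <;> by_cases ht : D s ≤ t - s <;>
    simp [hm, ht, lt_of_not_ge, not_lt_of_ge]

lemma sum_windowed_sub_Vmat_mulVec {d : ℕ} (A : ℕ → Fin d → ℝ) (lam : ℝ) (X : ℕ → ℝ)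
    (D : ℕ → ℕ) (m t : ℕ) (τ : ℝ) (θ : Fin d → ℝ) :
    ∑ s ∈ Ico 1 t, (X s * if D s ≤ min m (t - s) then 1 else 0) • A s -
        Vmat A lam t *ᵥ (τ • θ) =
      ∑ s ∈ Ico 1 t, (X s * ((if D s ≤ m then 1 else 0) - τ)) • A s +
        τ • (∑ s ∈ Ico 1 t, (X s - A s ⬝ᵥ θ) • A s - lam • θ) -
          ∑ s ∈ pendingRounds D m t, X s • A s := by
  rw [sum_mul_ite_le_min_smul, mulVec_smul, Vmat_mulVec]
  simp only [mul_sub, sub_smul, mul_comm (X _) τ, mul_smul τ, sum_sub_distrib, ← smul_sum]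
  module

lemma mnorm_sum_pendingRounds_le {d : ℕ} {M : Matrix (Fin d) (Fin d) ℝ} (hM : M.PosSemidef)
    (A : ℕ → Fin d → ℝ) (X : ℕ → ℝ) (D : ℕ → ℕ) (m t : ℕ) :
    mnorm M (∑ s ∈ pendingRounds D m t, X s • A s) ≤
      ∑ s ∈ Ico (max 1 (t - m)) t, |X s| * mnorm M (A s) :=
  (mnorm_sum_smul_le hM _ X A).trans <|
    sum_le_sum_of_subset_of_nonneg (pendingRounds_subset_Ico D m t) fun s _ _ ↦
      mul_nonneg (abs_nonneg _) (mnorm_nonneg M (A s))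

end Delay

theorem deterministic_concentration_decomposition_general
    {d : ℕ} {lam : ℝ} (hlam : 0 < lam) (m t : ℕ) (τ : ℝ) (θ : Fin d → ℝ)
    (A : ℕ → Fin d → ℝ) (X : ℕ → ℝ) (D : ℕ → ℕ)
    (η : ℕ → ℝ) (hη : ∀ s, η s = X s - A s ⬝ᵥ θ)
    (ε : ℕ → ℝ) (hε : ∀ s, ε s = (if D s ≤ m then (1 : ℝ) else 0) - τ)
    (θhat : Fin d → ℝ)
    (hθhat : θhat = (Vmat A lam t)⁻¹ *ᵥ
      ∑ s ∈ Ico 1 t, (X s * (if D s ≤ min m (t - s) then (1 : ℝ) else 0)) • A s) :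
    mnorm (Vmat A lam t) (θhat - τ • θ) ≤
      mnorm (Vmat A lam t)⁻¹ (∑ s ∈ Ico 1 t, (X s * ε s) • A s) +
        |τ| * (mnorm (Vmat A lam t)⁻¹ (∑ s ∈ Ico 1 t, η s • A s) + √lam * √(θ ⬝ᵥ θ)) +
          ∑ s ∈ Ico (max 1 (t - m)) t, |X s| * mnorm (Vmat A lam t)⁻¹ (A s) := by
  have hV := Vmat_posDef A hlam t
  have hdet : IsUnit (Vmat A lam t).det := hV.det_pos.ne'.isUnit
  have hInv : (Vmat A lam t)⁻¹.PosSemidef := hV.inv.posSemidef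
  rw [hθhat, mnorm_inv_mulVec_sub hdet, sum_windowed_sub_Vmat_mulVec]
  simp only [← hη, ← hε]
  have regularization : mnorm (Vmat A lam t)⁻¹ (lam • θ) ≤ √lam * √(θ ⬝ᵥ θ) := by
    rw [mnorm_smul, abs_of_pos hlam]
    exact mul_mnorm_inv_le hdet hlam.le (Vmat_sub_smul_one_posSemidef A lam t) θ
  refine (mnorm_sub_le hInv _ _).trans
    (add_le_add ((mnorm_add_le hInv _ _).trans ?_) (mnorm_sum_pendingRounds_le hInv A X D m t))
  rw [mnorm_smul]
  gcongr
  exact (mnorm_sub_le hInv _ _).trans (by gcongr)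

theorem deterministic_concentration_decomposition
    {d : ℕ} (hd : 1 ≤ d) (lam : ℝ) (hlam : 0 < lam)
    (m t : ℕ) (hm : 1 ≤ m) (ht : 1 ≤ t)
    (g : ℝ) (hg : 0 ≤ g) (τ : ℝ) (hτ : τ ∈ Set.Icc (0 : ℝ) 1)
    (θ : Fin d → ℝ) (hθ : Real.sqrt (θ ⬝ᵥ θ) ≤ 1)
    (A : ℕ → Fin d → ℝ) (X : ℕ → ℝ) (hX : ∀ s, X s ∈ Set.Icc (0 : ℝ) 1)
    (D : ℕ → ℕ)
    (η : ℕ → ℝ) (hη : ∀ s, η s = X s - A s ⬝ᵥ θ)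
    (ε : ℕ → ℝ) (hε : ∀ s, ε s = (if D s ≤ m then (1 : ℝ) else 0) - τ)
    (θhat : Fin d → ℝ)
    (hθhat : θhat = (Vmat A lam t)⁻¹.mulVec
      (∑ s ∈ Finset.Ico 1 t, (X s * (if D s ≤ min m (t - s) then (1 : ℝ) else 0)) • A s))
    (h1 : mnorm (Vmat A lam t)⁻¹ (∑ s ∈ Finset.Ico 1 t, (X s * ε s) • A s) ≤ g)
    (h2 : mnorm (Vmat A lam t)⁻¹ (∑ s ∈ Finset.Ico 1 t, η s • A s) ≤ g) :
    mnorm (Vmat A lam t) (θhat - τ • θ) ≤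
      2 * g + Real.sqrt lam +
        ∑ s ∈ Finset.Ico (max 1 (t - m)) t, mnorm (Vmat A lam t)⁻¹ (A s) := by
  have hτ_abs : |τ| ≤ 1 := abs_le.mpr ⟨by linarith [hτ.1], hτ.2⟩
  have hX_abs (s : ℕ) : |X s| ≤ 1 := abs_le.mpr ⟨by linarith [(hX s).1], (hX s).2⟩
  calc
    mnorm (Vmat A lam t) (θhat - τ • θ) ≤ _ :=
      deterministic_concentration_decomposition_general hlam m t τ θ A X D η hη ε hε θhat hθhat
    _ ≤ g + 1 * (g + √lam * 1) +
        ∑ s ∈ Ico (max 1 (t - m)) t, 1 * mnorm (Vmat A lam t)⁻¹ (A s) := by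
      gcongr with s
      · exact add_nonneg (mnorm_nonneg _ _) (by positivity)
      · exact mnorm_nonneg _ _
      · exact hX_abs s
    _ = _ := by
      simp only [one_mul, mul_one]
      ring
end

section
/- (Elliptical potential) Let d ≥ 1, λ ≥ 1, T ≥ 1, and A_1,…,A_T ∈ ℝ^d with ‖A_t‖₂ ≤ 1 for all t. Then Σ_{t=1}^T ‖A_t‖²_{V_t(λ)^{-1}} ≤ 2 d log((dλ + T)/(dλ)). -/
open Finset Matrix

/-!
By the matrix determinant lemma, each step multiplies `det V_t` by `1 + ‖A_t‖²_{V_t⁻¹}`, so the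
product of these factors telescopes to `det V_{T+1} / λ ^ d`. AM-GM on the eigenvalues bounds
`det V_{T+1}` by `(tr V_{T+1} / d) ^ d`, and `tr V_{T+1} = dλ + ∑ ‖A_t‖₂²`. Since `V_t ≥ λ I`, each
`‖A_t‖²_{V_t⁻¹}` is at most `‖A_t‖₂² / λ`, hence at most `2`, and `x ≤ 2 log (1 + x)` on `[0, 2]`
turns the product into the sum.
-/

theorem le_two_mul_log_one_add {x : ℝ} (hx₀ : 0 ≤ x) (hx₂ : x ≤ 2) :
    x ≤ 2 * Real.log (1 + x) := by
  have hlog : 2 * x / (x + 2) ≤ Real.log (1 + x) := Real.le_log_one_add_of_nonneg hx₀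
  have hfrac : x / 2 ≤ 2 * x / (x + 2) := by
    rw [div_le_div_iff₀ two_pos (by linarith)]
    nlinarith
  linarith

section Matrix

variable {n : Type*} [Fintype n] [DecidableEq n]

theorem det_add_vecMulVec {R : Type*} [CommRing R] {M : Matrix n n R} (hM : IsUnit M.det)
    (u v : n → R) : (M + vecMulVec u v).det = M.det * (1 + v ⬝ᵥ M⁻¹ *ᵥ u) := by
  rw [vecMulVec_eq Unit, det_add_replicateCol_mul_replicateRow hM, Matrix.mul_assoc,
    ← replicateCol_mulVec, det_unique (n := Unit), Matrix.add_apply, one_apply_eq,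
    replicateRow_mul_replicateCol_apply]

theorem posSemidef_inv_sub_inv {K : Type*} [Field K] [PartialOrder K] [StarRing K]
    [AddLeftMono K] {M N : Matrix n n K} (hN : N.PosDef) (hMN : (M - N).PosSemidef) :
    (N⁻¹ - M⁻¹).PosSemidef := by
  have hM : M.PosDef := by simpa using hN.add_posSemidef hMN
  have hNdet : IsUnit N.det := (isUnit_iff_isUnit_det N).1 hN.isUnit
  have hMdet : IsUnit M.det := (isUnit_iff_isUnit_det M).1 hM.isUnit
  have hfactor : N⁻¹ - M⁻¹ = M⁻¹ * ((M - N) + (M - N) * N⁻¹ * (M - N)) * M⁻¹ := by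
    have hmid : (M - N) + (M - N) * N⁻¹ * (M - N) = M * (N⁻¹ * (M - N)) := by
      rw [Matrix.mul_assoc, Matrix.sub_mul M N, mul_nonsing_inv_cancel_left _ _ hNdet,
        add_sub_cancel]
    rw [hmid, nonsing_inv_mul_cancel_left _ _ hMdet,
      Matrix.inv_sub_inv (iff_of_true hN.isUnit hM.isUnit)]
  have hpsd : ((M - N) + (M - N) * N⁻¹ * (M - N)).PosSemidef := by
    simpa only [hMN.isHermitian.eq] using
      hMN.add (hN.inv.posSemidef.conjTranspose_mul_mul_same (M - N))
  rw [hfactor]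
  simpa only [hM.inv.isHermitian.eq] using hpsd.conjTranspose_mul_mul_same M⁻¹

theorem det_le_trace_div_card_pow [Nonempty n] {M : Matrix n n ℝ} (hM : M.PosSemidef) :
    M.det ≤ (M.trace / Fintype.card n) ^ Fintype.card n := by
  set μ := hM.isHermitian.eigenvalues
  have hμ : ∀ i, 0 ≤ μ i := hM.eigenvalues_nonneg
  have hdet : M.det = ∏ i, μ i := hM.isHermitian.det_eq_prod_eigenvalues
  have htrace : M.trace = ∑ i, μ i := hM.isHermitian.trace_eq_sum_eigenvalues
  have hamgm : (∏ i, μ i) ^ (Fintype.card n : ℝ)⁻¹ ≤ (∑ i, μ i) / Fintype.card n := by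
    simpa using Real.geom_mean_le_arith_mean univ (fun _ ↦ 1) μ (by simp)
      (by simp [Fintype.card_pos]) fun i _ ↦ hμ i
  have hprod : 0 ≤ ∏ i, μ i := prod_nonneg fun i _ ↦ hμ i
  calc M.det = ((∏ i, μ i) ^ (Fintype.card n : ℝ)⁻¹) ^ Fintype.card n := by
        rw [hdet, Real.rpow_inv_natCast_pow hprod Fintype.card_ne_zero]
    _ ≤ (M.trace / Fintype.card n) ^ Fintype.card n := by
        rw [htrace]
        gcongr

end Matrix

section EllipticalPotential

variable {d : ℕ} (A : ℕ → Fin d → ℝ) (lam : ℝ)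

theorem mnorm_sq {M : Matrix (Fin d) (Fin d) ℝ} (hM : M.PosSemidef) (x : Fin d → ℝ) :
    mnorm M x ^ 2 = x ⬝ᵥ M *ᵥ x :=
  Real.sq_sqrt (hM.dotProduct_mulVec_nonneg x)

theorem Vmat_one : Vmat A lam 1 = lam • 1 := by
  simp [Vmat]

theorem Vmat_succ {t : ℕ} (ht : 1 ≤ t) :
    Vmat A lam (t + 1) = Vmat A lam t + vecMulVec (A t) (A t) := by
  simp only [Vmat, sum_Ico_succ_top ht, add_assoc]

theorem trace_Vmat_succ (T : ℕ) :
    (Vmat A lam (T + 1)).trace = d * lam + ∑ t ∈ Icc 1 T, A t ⬝ᵥ A t := by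
  simp [Vmat, trace_sum, trace_vecMulVec, mul_comm, Ico_add_one_right_eq_Icc]

theorem posSemidef_Vmat_sub (t : ℕ) : (Vmat A lam t - lam • 1).PosSemidef := by
  rw [Vmat, add_sub_cancel_left]
  exact posSemidef_sum _ fun s _ ↦ posSemidef_vecMulVec_self_star (A s)

variable {A lam}

theorem posDef_Vmat (hlam : 0 < lam) (t : ℕ) : (Vmat A lam t).PosDef := by
  simpa using (PosDef.one.smul hlam).add_posSemidef (posSemidef_Vmat_sub A lam t)

theorem mnorm_inv_Vmat_sq_le (hlam : 0 < lam) (t : ℕ) (x : Fin d → ℝ) :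
    mnorm (Vmat A lam t)⁻¹ x ^ 2 ≤ x ⬝ᵥ x / lam := by
  have hinv : (lam • 1 : Matrix (Fin d) (Fin d) ℝ)⁻¹ = lam⁻¹ • 1 :=
    inv_eq_left_inv (by simp [hlam.ne'])
  have hdiff := (posSemidef_inv_sub_inv (PosDef.one.smul hlam)
    (posSemidef_Vmat_sub A lam t)).dotProduct_mulVec_nonneg x
  rw [hinv, star_trivial, sub_mulVec, dotProduct_sub, smul_mulVec, one_mulVec, dotProduct_smul,
    smul_eq_mul, inv_mul_eq_div] at hdiff
  rw [mnorm_sq (posDef_Vmat hlam t).inv.posSemidef]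
  linarith

theorem det_Vmat_succ (hlam : 0 < lam) {t : ℕ} (ht : 1 ≤ t) :
    (Vmat A lam (t + 1)).det = (Vmat A lam t).det * (1 + mnorm (Vmat A lam t)⁻¹ (A t) ^ 2) := by
  have hV := posDef_Vmat (A := A) hlam t
  rw [Vmat_succ A lam ht, det_add_vecMulVec hV.det_pos.ne'.isUnit, mnorm_sq hV.inv.posSemidef]

theorem det_Vmat_succ_eq_prod (hlam : 0 < lam) (T : ℕ) :
    (Vmat A lam (T + 1)).det =
      lam ^ d * ∏ t ∈ Icc 1 T, (1 + mnorm (Vmat A lam t)⁻¹ (A t) ^ 2) := by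
  induction T with
  | zero => simp [Vmat_one]
  | succ T ih =>
    rw [det_Vmat_succ hlam T.succ_pos, ih, prod_Icc_succ_top T.succ_pos, mul_assoc]

theorem prod_one_add_mnorm_inv_Vmat_sq_le (hd : 1 ≤ d) (hlam : 0 < lam) (T : ℕ) :
    ∏ t ∈ Icc 1 T, (1 + mnorm (Vmat A lam t)⁻¹ (A t) ^ 2) ≤
      ((d * lam + ∑ t ∈ Icc 1 T, A t ⬝ᵥ A t) / (d * lam)) ^ d := by
  have : Nonempty (Fin d) := ⟨⟨0, hd⟩⟩
  have hdet := det_le_trace_div_card_pow (posDef_Vmat (A := A) hlam (T + 1)).posSemidef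
  rw [det_Vmat_succ_eq_prod hlam, trace_Vmat_succ, Fintype.card_fin] at hdet
  rw [← div_div, div_pow _ lam]
  exact (le_div_iff₀' (pow_pos hlam d)).2 hdet

theorem sum_log_one_add_mnorm_inv_Vmat_sq_le (hd : 1 ≤ d) (hlam : 0 < lam) (T : ℕ) :
    ∑ t ∈ Icc 1 T, Real.log (1 + mnorm (Vmat A lam t)⁻¹ (A t) ^ 2) ≤
      d * Real.log ((d * lam + ∑ t ∈ Icc 1 T, A t ⬝ᵥ A t) / (d * lam)) := by
  have hpos (t : ℕ) : 0 < 1 + mnorm (Vmat A lam t)⁻¹ (A t) ^ 2 := by positivity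
  rw [← Real.log_prod fun t _ ↦ (hpos t).ne', ← Real.log_pow]
  exact Real.log_le_log (prod_pos fun t _ ↦ hpos t) (prod_one_add_mnorm_inv_Vmat_sq_le hd hlam T)

theorem elliptical_potential_general (hd : 1 ≤ d) (hlam : 0 < lam) {L : ℝ} (hL : L ^ 2 ≤ 2 * lam)
    (T : ℕ) (hA : ∀ t ∈ Icc 1 T, √(A t ⬝ᵥ A t) ≤ L) :
    ∑ t ∈ Icc 1 T, mnorm (Vmat A lam t)⁻¹ (A t) ^ 2 ≤
      2 * d * Real.log ((d * lam + T * L ^ 2) / (d * lam)) := by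
  have hA_sq : ∀ t ∈ Icc 1 T, A t ⬝ᵥ A t ≤ L ^ 2 := fun t ht ↦ (Real.sqrt_le_iff.1 (hA t ht)).2
  have hstep : ∀ t ∈ Icc 1 T, mnorm (Vmat A lam t)⁻¹ (A t) ^ 2 ≤ 2 := fun t ht ↦
    (mnorm_inv_Vmat_sq_le hlam t (A t)).trans ((div_le_iff₀ hlam).2 ((hA_sq t ht).trans hL))
  have hsum : ∑ t ∈ Icc 1 T, A t ⬝ᵥ A t ≤ T * L ^ 2 := by
    simpa using sum_le_card_nsmul _ _ _ hA_sq
  have hsum_nonneg : 0 ≤ ∑ t ∈ Icc 1 T, A t ⬝ᵥ A t :=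
    sum_nonneg fun t _ ↦ dotProduct_star_self_nonneg (A t)
  calc ∑ t ∈ Icc 1 T, mnorm (Vmat A lam t)⁻¹ (A t) ^ 2
      ≤ 2 * ∑ t ∈ Icc 1 T, Real.log (1 + mnorm (Vmat A lam t)⁻¹ (A t) ^ 2) := by
        rw [mul_sum]
        exact sum_le_sum fun t ht ↦ le_two_mul_log_one_add (sq_nonneg _) (hstep t ht)
    _ ≤ 2 * (d * Real.log ((d * lam + ∑ t ∈ Icc 1 T, A t ⬝ᵥ A t) / (d * lam))) := by
        gcongr
        exact sum_log_one_add_mnorm_inv_Vmat_sq_le hd hlam T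
    _ ≤ 2 * d * Real.log ((d * lam + T * L ^ 2) / (d * lam)) := by
        rw [mul_assoc]
        gcongr

end EllipticalPotential

/-- Elliptical potential lemma. -/
theorem elliptical_potential
    {d : ℕ} (hd : 1 ≤ d) (lam : ℝ) (hlam : 1 ≤ lam) (T : ℕ) (hT : 1 ≤ T)
    (A : ℕ → Fin d → ℝ) (hA : ∀ t ∈ Finset.Icc 1 T, Real.sqrt (A t ⬝ᵥ A t) ≤ 1) :
    ∑ t ∈ Finset.Icc 1 T, (mnorm (Vmat A lam t)⁻¹ (A t)) ^ 2 ≤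
      2 * d * Real.log ((d * lam + T) / (d * lam)) := by
  simpa using elliptical_potential_general hd (zero_lt_one.trans_le hlam) (L := 1)
    (by linarith) T hA
end
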